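/- For every positive integer m and all r ≥ 1, the one-variable specialisation H_r(1,1,m) of the rooted-hypermap generating polynomial satisfies H_r(1,1,m) = r · m^{(r)} − Σ_{k=1}^{r−1} m^{(k)} · H_{r−k}(1,1,m), where m^{(k)} = Γ(m+k)/Γ(m) = m(m+1)⋯(m+k−1) is the ascending factorial. -/

import Mathlib

open Finset

/-- Number of cycles of a permutation, counting fixed points as cycles of length 1. -/
def cyc {r : ℕ} (σ : Equiv.Perm (Fin r)) : ℕ :=
  σ.cycleType.card + (Finset.univ.filter fun x => σ x = x).card

/-- A pair of permutations is transitive if the subgroup they generate acts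
transitively on `Fin r`. -/
def IsTransitivePair {r : ℕ} (σ τ : Equiv.Perm (Fin r)) : Prop :=
  ∀ x y : Fin r, ∃ g ∈ Subgroup.closure ({σ, τ} : Set (Equiv.Perm (Fin r))), g x = y

open Classical in
/-- `h_r(m,n,λ) = Σ_{transitive (σ,τ)} m^{cyc σ} n^{cyc τ} λ^{cyc((στ)⁻¹)}`. -/
noncomputable def hSum (r m n lam : ℕ) : ℕ :=
  ∑ p ∈ Finset.univ.filter
      (fun p : Equiv.Perm (Fin r) × Equiv.Perm (Fin r) => IsTransitivePair p.1 p.2),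
    m ^ cyc p.1 * n ^ cyc p.2 * lam ^ cyc (p.1 * p.2)⁻¹

/-- `H_r(m,n,λ) = h_r(m,n,λ)/(r-1)!`, the generating polynomial for rooted
hypermaps with `r` darts. -/
noncomputable def Hpoly (r m n lam : ℕ) : ℚ :=
  (hSum r m n lam : ℚ) / (r - 1).factorial

open Equiv

noncomputable def wt {α : Type*} (m : ℕ) (σ : Perm α) : ℕ :=
  Nat.card {f : α → Fin m // ∀ x, f (σ x) = f x}

lemma inv_sameCycle {α β : Type*} (σ : Perm α) (f : α → β) (h : ∀ x, f (σ x) = f x) (x y : α)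
    (hxy : σ.SameCycle x y) : f x = f y := by
  obtain ⟨i, rfl⟩ := hxy
  have hn : ∀ (n : ℕ) x, f ((σ ^ n) x) = f x := by
    intro n
    induction n with
    | zero => intro x; rfl
    | succ n ih => intro x; rw [pow_succ', Perm.mul_apply, h, ih]
  cases i with
  | ofNat n => exact (hn n x).symm
  | negSucc n =>
    have := hn (n+1) ((σ ^ (Int.negSucc n)) x)
    rw [← this, zpow_negSucc]
    simp

lemma pow_cyc_eq_wt {r : ℕ} (m : ℕ) (σ : Perm (Fin r)) : m ^ cyc σ = wt m σ := by
  classical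
  let B := {c // c ∈ σ.cycleFactorsFinset} ⊕ {x // σ x = x}
  have hB : Nat.card B = cyc σ := by
    simp [B, cyc, Perm.cycleType_def, Fintype.card_subtype]
  let F : Fin r → B := fun x => if h : σ x = x then Sum.inr ⟨x, h⟩ else
    Sum.inl ⟨σ.cycleOf x, Perm.cycleOf_mem_cycleFactorsFinset_iff.2 (Perm.mem_support.2 h)⟩
  have hF1 : ∀ x, F (σ x) = F x := by
    intro x
    by_cases h : σ x = x
    · rw [h]
    · have h' : σ (σ x) ≠ σ x := fun h' => h (σ.injective h')
      simp only [F, h, h', dif_neg, not_false_iff]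
      simp
  have hF2 : ∀ x y, F x = F y → σ.SameCycle x y := by
    intro x y hxy
    by_cases hx : σ x = x <;> by_cases hy : σ y = y <;> simp only [F, hx, hy, dif_pos, dif_neg, not_false_iff] at hxy
    · cases Subtype.ext_iff.1 (Sum.inr.inj hxy); rfl
    · exact absurd hxy (by simp)
    · exact absurd hxy (by simp)
    · exact (Perm.sameCycle_iff_cycleOf_eq_of_mem_support (Perm.mem_support.2 hx)
        (Perm.mem_support.2 hy)).2 (Subtype.ext_iff.1 (Sum.inl.inj hxy))
  have hF3 : Function.Surjective F := by
    rintro (⟨c, hc⟩ | ⟨x, hx⟩)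
    · obtain ⟨a, ha⟩ := Perm.IsCycle.nonempty_support (Perm.mem_cycleFactorsFinset_iff.1 hc).1
      have h1 := Perm.cycle_is_cycleOf ha hc
      have h2 := Perm.mem_cycleFactorsFinset_support_le hc ha
      refine ⟨a, ?_⟩
      simp [F, Perm.mem_support.1 h2, h1]
    · exact ⟨x, by simp [F, hx]⟩
  have : Nat.card (B → Fin m) = m ^ cyc σ := by
    rw [Nat.card_fun, hB]; simp
  rw [← this, wt]
  apply Nat.card_congr
  refine Equiv.ofBijective (fun g => ⟨g ∘ F, fun x => by simp [hF1]⟩) ⟨?_, ?_⟩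
  · intro g g' h
    exact hF3.injective_comp_right (congrArg Subtype.val h)
  · rintro ⟨f, hf⟩
    refine ⟨f ∘ Function.surjInv hF3, Subtype.ext (funext fun x => ?_)⟩
    exact inv_sameCycle σ f hf _ _ (hF2 _ _ (Function.surjInv_eq hF3 _))

lemma wt_inv {α : Type*} (m : ℕ) (σ : Perm α) : wt m σ⁻¹ = wt m σ := by
  apply Nat.card_congr
  refine Equiv.subtypeEquivRight fun f => ⟨fun h x => ?_, fun h x => ?_⟩
  · have := h (σ x); simpa using this.symm
  · have := h (σ⁻¹ x); simpa using this.symm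

lemma wt_permCongr {α β : Type*} (m : ℕ) (e : α ≃ β) (σ : Perm α) :
    wt m (e.permCongr σ) = wt m σ := by
  apply Nat.card_congr
  refine Equiv.subtypeEquiv (e.symm.arrowCongr (Equiv.refl _)) fun f => ?_
  rw [e.symm.forall_congr_left]
  simp

lemma wt_subtypeCongr {α : Type*} (m : ℕ) (p : α → Prop) [DecidablePred p] [Finite α]
    (a : Perm {x // p x}) (c : Perm {x // ¬ p x}) :
    wt m (a.subtypeCongr c) = wt m a * wt m c := by
  unfold wt
  rw [← Nat.card_prod]
  apply Nat.card_congr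
  refine Equiv.ofBijective (fun f => (⟨fun x => f.1 x, fun x => ?_⟩, ⟨fun x => f.1 x, fun x => ?_⟩))
    ⟨?_, ?_⟩
  · simpa using f.2 x
  · simpa using f.2 x
  · intro f g h
    simp only [Prod.mk.injEq, Subtype.mk.injEq, funext_iff] at h
    apply Subtype.ext; funext x
    by_cases hx : p x
    · exact h.1 ⟨x, hx⟩
    · exact h.2 ⟨x, hx⟩
  · rintro ⟨⟨f, hf⟩, ⟨g, hg⟩⟩
    refine ⟨⟨fun x => if h : p x then f ⟨x, h⟩ else g ⟨x, h⟩, fun x => ?_⟩, ?_⟩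
    · by_cases hx : p x
      · simp [hx, hf, (a ⟨x, hx⟩).2]
      · simp [hx, hg, (c ⟨x, hx⟩).2]
    · ext x
      · simp [x.2]
      · simp [x.2]

noncomputable def W (m : ℕ) (α : Type*) [Fintype α] [DecidableEq α] : ℕ := ∑ σ : Perm α, wt m σ

lemma wt_decomp_none {α : Type*} (m : ℕ) [DecidableEq α] [Finite α] (τ : Perm α) :
    wt m (Perm.decomposeOption.symm (none, τ)) = m * wt m τ := by
  trans Nat.card (Fin m) * wt m τ
  swap
  · simp
  unfold wt
  rw [← Nat.card_prod]
  apply Nat.card_congr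
  refine Equiv.ofBijective (fun f => (f.1 none, ⟨fun x => f.1 (some x), fun x => ?_⟩)) ⟨?_, ?_⟩
  · simpa using f.2 (some x)
  · intro f g h
    simp only [Prod.mk.injEq, Subtype.mk.injEq, funext_iff] at h
    apply Subtype.ext; funext x
    cases x with
    | none => exact h.1
    | some x => exact h.2 x
  · rintro ⟨c, ⟨f, hf⟩⟩
    refine ⟨⟨fun x => x.elim c f, fun x => ?_⟩, ?_⟩
    · cases x <;> simp [hf]
    · simp

lemma wt_decomp_some {α : Type*} (m : ℕ) [DecidableEq α] [Finite α] (a : α) (τ : Perm α) :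
    wt m (Perm.decomposeOption.symm (some a, τ)) = wt m τ := by
  have key : ∀ f : Option α → Fin m, (∀ x, f (Perm.decomposeOption.symm (some a, τ) x) = f x) ↔
      (f none = f (some a) ∧ ∀ x, f (some (τ x)) = f (some x)) := by
    intro f
    have sw : f none = f (some a) → ∀ y, f (swap none (some a) y) = f y := by
      intro h y
      rcases eq_or_ne y none with rfl | h1
      · simp [h]
      rcases eq_or_ne y (some a) with rfl | h2
      · simp [h]
      rw [swap_apply_of_ne_of_ne h1 h2]
    constructor
    · intro h
      have h0 : f none = f (some a) := by simpa using (h none).symm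
      refine ⟨h0, fun x => ?_⟩
      have := h (some x)
      simp only [Perm.decomposeOption_symm_apply, Perm.mul_apply, sw h0] at this
      simpa using this
    · rintro ⟨h0, h⟩ x
      simp only [Perm.decomposeOption_symm_apply, Perm.mul_apply, sw h0]
      cases x <;> simp [h]
  unfold wt
  apply Nat.card_congr
  refine Equiv.ofBijective (fun f => ⟨fun x => f.1 (some x), ((key f.1).1 f.2).2⟩) ⟨?_, ?_⟩
  · intro f g h
    simp only [Subtype.mk.injEq, funext_iff] at h
    apply Subtype.ext; funext x
    cases x with
    | none => rw [((key f.1).1 f.2).1, ((key g.1).1 g.2).1, h]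
    | some x => exact h x
  · rintro ⟨f, hf⟩
    exact ⟨⟨fun x => x.elim (f a) f, (key (fun x => x.elim (f a) f)).2 ⟨rfl, hf⟩⟩, rfl⟩

lemma W_congr {α β : Type*} [Fintype α] [DecidableEq α] [Fintype β] [DecidableEq β] (m : ℕ)
    (e : α ≃ β) : W m α = W m β :=
  Fintype.sum_equiv e.permCongr _ _ fun σ => (wt_permCongr m e σ).symm

lemma W_option {α : Type*} [Fintype α] [DecidableEq α] (m : ℕ) :
    W m (Option α) = (m + Fintype.card α) * W m α := by
  unfold W
  rw [← Fintype.sum_equiv Perm.decomposeOption.symm (fun p => wt m (Perm.decomposeOption.symm p)) _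
    (fun _ => rfl), Fintype.sum_prod_type, Fintype.sum_option]
  simp only [wt_decomp_none, wt_decomp_some]
  simp [← Finset.mul_sum, add_mul]

lemma W_fin (m n : ℕ) : W m (Fin n) = m.ascFactorial n := by
  induction n with
  | zero =>
    simp [W, wt]
  | succ n ih =>
    rw [W_congr m (finSuccEquiv n), W_option, ih, Nat.ascFactorial_succ]; simp

lemma W_eq (m : ℕ) (α : Type*) [Fintype α] [DecidableEq α] :
    W m α = m.ascFactorial (Fintype.card α) := by
  rw [W_congr m (Fintype.equivFin α), W_fin]

def Reach {α : Type*} (σ τ : Perm α) : α → α → Prop :=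
  Relation.EqvGen (fun a b => σ a = b ∨ τ a = b)

lemma reach_closure {r : ℕ} (σ τ : Perm (Fin r)) (x y : Fin r) :
    (∃ g ∈ Subgroup.closure ({σ, τ} : Set (Perm (Fin r))), g x = y) ↔ Reach σ τ x y := by
  constructor
  · rintro ⟨g, hg, rfl⟩
    induction hg using Subgroup.closure_induction generalizing x with
    | mem g hg =>
      apply Relation.EqvGen.rel
      rcases hg with rfl | rfl
      · exact Or.inl rfl
      · exact Or.inr rfl
    | one => exact Relation.EqvGen.refl _
    | mul g h _ _ ihg ihh => exact (ihh x).trans _ _ _ (ihg (h x))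
    | inv g _ ih =>
      have := ih (g⁻¹ x)
      rw [← Perm.mul_apply, mul_inv_cancel, Perm.one_apply] at this
      exact this.symm _ _
  · intro h
    induction h with
    | rel x y h =>
      rcases h with rfl | rfl
      · exact ⟨σ, Subgroup.subset_closure (by simp), rfl⟩
      · exact ⟨τ, Subgroup.subset_closure (by simp), rfl⟩
    | refl x => exact ⟨1, one_mem _, rfl⟩
    | symm x y _ ih =>
      obtain ⟨g, hg, rfl⟩ := ih
      exact ⟨g⁻¹, inv_mem hg, by simp⟩
    | trans x y z _ _ ih1 ih2 =>
      obtain ⟨g, hg, rfl⟩ := ih1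
      obtain ⟨h, hh, rfl⟩ := ih2
      exact ⟨h * g, mul_mem hh hg, rfl⟩

def Trans2 {α : Type*} (p : Perm α × Perm α) : Prop := ∀ x y, Reach p.1 p.2 x y

open Classical in
noncomputable def TS (m : ℕ) (α : Type*) [Fintype α] [DecidableEq α] : ℕ :=
  ∑ p : Perm α × Perm α, if Trans2 p then wt m (p.1 * p.2) else 0

noncomputable def AS (m : ℕ) (α : Type*) [Fintype α] [DecidableEq α] : ℕ :=
  ∑ p : Perm α × Perm α, wt m (p.1 * p.2)

lemma hSum_eq (r m : ℕ) : hSum r 1 1 m = TS m (Fin r) := by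
  classical
  unfold hSum TS
  rw [Finset.sum_filter]
  refine Finset.sum_congr rfl fun p _ => ?_
  have : IsTransitivePair p.1 p.2 ↔ Trans2 p := by
    simp only [IsTransitivePair, reach_closure, Trans2]
  simp only [one_pow, one_mul, pow_cyc_eq_wt, wt_inv]
  by_cases h : Trans2 p
  · rw [if_pos h, if_pos (this.2 h)]
  · rw [if_neg h, if_neg (fun h' => h (this.1 h'))]

lemma AS_eq (m : ℕ) (α : Type*) [Fintype α] [DecidableEq α] :
    AS m α = (Fintype.card α).factorial * m.ascFactorial (Fintype.card α) := by
  unfold AS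
  rw [Fintype.sum_prod_type]
  have : ∀ σ : Perm α, ∑ τ : Perm α, wt m (σ * τ) = W m α := fun σ =>
    Fintype.sum_equiv (Equiv.mulLeft σ) _ _ fun τ => rfl
  simp only [this, W_eq]
  simp [Fintype.card_perm]

lemma reach_map {α β : Type*} (e : α → β) (σ τ : Perm α) (σ' τ' : Perm β)
    (h1 : ∀ x, σ' (e x) = e (σ x)) (h2 : ∀ x, τ' (e x) = e (τ x)) (x y : α)
    (h : Reach σ τ x y) : Reach σ' τ' (e x) (e y) := by
  induction h with
  | rel x y h =>
    apply Relation.EqvGen.rel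
    rcases h with rfl | rfl
    · exact Or.inl (h1 _)
    · exact Or.inr (h2 _)
  | refl x => exact Relation.EqvGen.refl _
  | symm x y _ ih => exact ih.symm _ _
  | trans x y z _ _ ih1 ih2 => exact ih1.trans _ _ _ ih2

lemma trans2_congr {α β : Type*} (e : α ≃ β) (p : Perm α × Perm α) :
    Trans2 (e.permCongr p.1, e.permCongr p.2) ↔ Trans2 p := by
  constructor
  · intro h x y
    have := reach_map e.symm _ _ p.1 p.2 (by simp) (by simp) _ _ (h (e x) (e y))
    simpa using this
  · intro h x y
    have := reach_map e p.1 p.2 (e.permCongr p.1) (e.permCongr p.2) (by simp) (by simp) _ _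
      (h (e.symm x) (e.symm y))
    simpa using this

lemma TS_congr {α β : Type*} [Fintype α] [DecidableEq α] [Fintype β] [DecidableEq β] (m : ℕ)
    (e : α ≃ β) : TS m α = TS m β := by
  refine Fintype.sum_equiv (Equiv.prodCongr e.permCongr e.permCongr) _ _ fun p => ?_
  have h1 := trans2_congr e p
  have h2 : wt m (e.permCongr p.1 * e.permCongr p.2) = wt m (p.1 * p.2) := by
    rw [← wt_permCongr m e (p.1 * p.2)]
    congr 1
    ext x; simp
  have h3 : (e.permCongr.prodCongr e.permCongr) p = (e.permCongr p.1, e.permCongr p.2) := rfl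
  rw [h3]
  by_cases h : Trans2 p
  · rw [if_pos h, if_pos (h1.2 h), h2]
  · rw [if_neg h, if_neg (fun h' => h (h1.1 h'))]

lemma reach_glue {α : Type*} (p : α → Prop) [DecidablePred p]
    (a b : Perm {x // p x}) (c d : Perm {x // ¬ p x}) (x y : α)
    (h : Reach (a.subtypeCongr c) (b.subtypeCongr d) x y) :
    (p x ↔ p y) ∧ ∀ (hx : p x) (hy : p y), Reach a b ⟨x, hx⟩ ⟨y, hy⟩ := by
  induction h with
  | rel x y h =>
    by_cases hx : p x
    · rcases h with rfl | rfl
      · simp only [hx, Perm.subtypeCongr.left_apply, (a ⟨x, hx⟩).2, true_and]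
        intro _ _
        exact Relation.EqvGen.rel _ _ (Or.inl rfl)
      · simp only [hx, Perm.subtypeCongr.left_apply, (b ⟨x, hx⟩).2, true_and]
        intro _ _
        exact Relation.EqvGen.rel _ _ (Or.inr rfl)
    · refine ⟨?_, fun h => absurd h hx⟩
      rcases h with rfl | rfl
      · simp [hx, Perm.subtypeCongr.right_apply, (c ⟨x, hx⟩).2]
      · simp [hx, Perm.subtypeCongr.right_apply, (d ⟨x, hx⟩).2]
  | refl x => exact ⟨Iff.rfl, fun _ _ => Relation.EqvGen.refl _⟩
  | symm x y _ ih => exact ⟨ih.1.symm, fun hx hy => (ih.2 hy hx).symm _ _⟩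
  | trans x y z _ _ ih1 ih2 =>
    exact ⟨ih1.1.trans ih2.1, fun hx hz =>
      (ih1.2 hx (ih1.1.1 hx)).trans _ _ _ (ih2.2 (ih1.1.1 hx) hz)⟩

lemma orbit_glue {α : Type*} (p : α → Prop) [DecidablePred p] (x0 : α) (h0 : p x0)
    (a b : Perm {x // p x}) (c d : Perm {x // ¬ p x}) :
    (∀ y, Reach (a.subtypeCongr c) (b.subtypeCongr d) x0 y ↔ p y) ↔ Trans2 (a, b) := by
  constructor
  · intro h x y
    have hx := (h x).2 x.2
    have hy := (h y).2 y.2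
    exact (reach_glue p a b c d _ _ ((hx.symm _ _).trans _ _ _ hy)).2 x.2 y.2
  · intro h y
    refine ⟨fun hr => (reach_glue p a b c d _ _ hr).1.1 h0, fun hy => ?_⟩
    exact reach_map Subtype.val a b _ _ (by simp) (by simp) _ _ (h ⟨x0, h0⟩ ⟨y, hy⟩)

lemma glue_surj {α : Type*} (p : α → Prop) [DecidablePred p] (σ : Perm α)
    (h : ∀ x, p (σ x) ↔ p x) :
    ∃ (a : Perm {x // p x}) (c : Perm {x // ¬ p x}), a.subtypeCongr c = σ := by
  refine ⟨σ.subtypePerm h, σ.subtypePerm (fun x => not_congr (h x)), ?_⟩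
  ext x
  by_cases hx : p x <;> simp [hx]

open Classical in
lemma sum_orbit (m : ℕ) {α : Type*} [Fintype α] (p : α → Prop) (x0 : α) (h0 : p x0) :
    ∑ q : Perm α × Perm α, (if ∀ y, Reach q.1 q.2 x0 y ↔ p y then wt m (q.1 * q.2) else 0)
      = TS m {x // p x} * AS m {x // ¬ p x} := by
  unfold TS AS
  rw [Finset.sum_mul_sum, ← Finset.sum_product', Finset.univ_product_univ]
  symm
  apply Finset.sum_of_injOn
    (fun t : (Perm {x // p x} × Perm {x // p x}) × (Perm {x // ¬ p x} × Perm {x // ¬ p x}) =>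
      (t.1.1.subtypeCongr t.2.1, t.1.2.subtypeCongr t.2.2))
  · rintro ⟨⟨a, b⟩, c, d⟩ _ ⟨⟨a', b'⟩, c', d'⟩ _ h
    simp only [Prod.mk.injEq] at h
    have h1 := Perm.subtypeCongrHom_injective p (a₁ := (a, c)) (a₂ := (a', c')) h.1
    have h2 := Perm.subtypeCongrHom_injective p (a₁ := (b, d)) (a₂ := (b', d')) h.2
    simp only [Prod.mk.injEq] at h1 h2
    simp [h1, h2]
  · intro _ _; simp
  · rintro ⟨σ, τ⟩ _ hn
    apply if_neg
    intro h
    apply hn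
    have hs : ∀ x, p (σ x) ↔ p x := fun x => by
      rw [← h, ← h]
      have : Reach σ τ x (σ x) := Relation.EqvGen.rel _ _ (Or.inl rfl)
      exact ⟨fun h => h.trans _ _ _ (this.symm _ _), fun h => h.trans _ _ _ this⟩
    have ht : ∀ x, p (τ x) ↔ p x := fun x => by
      rw [← h, ← h]
      have : Reach σ τ x (τ x) := Relation.EqvGen.rel _ _ (Or.inr rfl)
      exact ⟨fun h => h.trans _ _ _ (this.symm _ _), fun h => h.trans _ _ _ this⟩
    obtain ⟨a, c, rfl⟩ := glue_surj p σ hs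
    obtain ⟨b, d, rfl⟩ := glue_surj p τ ht
    exact ⟨((a, b), (c, d)), by simp, rfl⟩
  · rintro ⟨⟨a, b⟩, c, d⟩ _
    have h1 := orbit_glue p x0 h0 a b c d
    have h2 : wt m (a.subtypeCongr c * b.subtypeCongr d) = wt m (a * b) * wt m (c * d) := by
      rw [← wt_subtypeCongr]
      congr 1
      exact ((Perm.subtypeCongrHom p).map_mul (a, c) (b, d)).symm
    simp only [h1, h2, ite_mul, zero_mul]

lemma AS_fiber (m r : ℕ) (x0 : Fin r) :
    AS m (Fin r) = ∑ S : Finset (Fin r), if x0 ∈ S then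
      TS m (Fin S.card) * AS m (Fin (r - S.card)) else 0 := by
  classical
  have key : ∀ q : Perm (Fin r) × Perm (Fin r), wt m (q.1 * q.2) =
      ∑ S : Finset (Fin r), if x0 ∈ S then
        (if ∀ y, Reach q.1 q.2 x0 y ↔ y ∈ S then wt m (q.1 * q.2) else 0) else 0 := by
    intro q
    rw [Finset.sum_eq_single (Finset.univ.filter fun y => Reach q.1 q.2 x0 y)]
    · have : Reach q.1 q.2 x0 x0 := Relation.EqvGen.refl _
      simp [this]
    · intro S _ hS
      split_ifs with h1 h2
      · exact absurd (by ext y; simp [h2]) hS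
      · rfl
      · rfl
    · simp
  unfold AS
  rw [Finset.sum_congr rfl fun q _ => key q, Finset.sum_comm]
  refine Finset.sum_congr rfl fun S _ => ?_
  split_ifs with h
  · have h1 := sum_orbit m (fun x => x ∈ S) x0 h
    have h2 : TS m {x // x ∈ S} = TS m (Fin S.card) := TS_congr m S.equivFin
    have h3 : AS m {x // ¬ x ∈ S} = AS m (Fin (r - S.card)) := by
      rw [AS_eq, AS_eq, Fintype.card_subtype_compl]; simp
    rw [← AS, ← h2, ← h3]
    convert h1
  · simp

lemma main_nat (m r : ℕ) : r * AS m (Fin r) =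
    ∑ k ∈ Finset.range (r + 1), r.choose k * (k * (TS m (Fin k) * AS m (Fin (r - k)))) := by
  have h : ∑ x0 : Fin r, AS m (Fin r) = ∑ x0 : Fin r, ∑ S : Finset (Fin r), if x0 ∈ S then
      TS m (Fin S.card) * AS m (Fin (r - S.card)) else 0 :=
    Finset.sum_congr rfl fun x0 _ => AS_fiber m r x0
  rw [Finset.sum_comm] at h
  simp only [Finset.sum_const, Finset.card_univ, Fintype.card_fin, smul_eq_mul,
    ← Finset.sum_filter, Finset.filter_mem_eq_inter, Finset.univ_inter] at h
  rw [h, ← Finset.powerset_univ, Finset.sum_powerset_apply_card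
    (fun k => k * (TS m (Fin k) * AS m (Fin (r - k))))]
  simp

/-- Recursion for the one-variable specialisation `H_r(1,1,m)`:
`H_r(1,1,m) = r·m^{(r)} - Σ_{k=1}^{r-1} m^{(k)} H_{r-k}(1,1,m)`. -/
theorem Hpoly_one_one_recursion (m : ℕ) (hm : 0 < m) (r : ℕ) (hr : 1 ≤ r) :
    Hpoly r 1 1 m =
      (r : ℚ) * (Nat.ascFactorial m r) -
        ∑ k ∈ Finset.Icc 1 (r - 1), (Nat.ascFactorial m k : ℚ) * Hpoly (r - k) 1 1 m := by
  have h := main_nat m r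
  simp only [← hSum_eq, AS_eq, Fintype.card_fin] at h
  have h' := congrArg (Nat.cast : ℕ → ℚ) h
  push_cast at h'
  have hterm : ∀ k ∈ Finset.range (r + 1), (r.choose k : ℚ) * (k * (hSum k 1 1 m *
      ((r - k).factorial * m.ascFactorial (r - k)))) =
      r.factorial * (if k = 0 then 0 else m.ascFactorial (r - k) * Hpoly k 1 1 m) := by
    intro k hk
    have hk : k ≤ r := by simpa [Nat.lt_succ_iff] using hk
    rcases k with _ | k
    · simp
    · rw [Nat.cast_choose ℚ hk]
      simp only [Hpoly, Nat.add_sub_cancel, Nat.succ_ne_zero, if_false]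
      have h1 : ((r - (k+1)).factorial : ℚ) ≠ 0 := by positivity
      have h2 : (k.factorial : ℚ) ≠ 0 := by positivity
      rw [Nat.factorial_succ]
      push_cast
      field_simp
  rw [Finset.sum_congr rfl hterm, ← Finset.mul_sum] at h'
  have h0 : (r.factorial : ℚ) ≠ 0 := by positivity
  have h3 : (r : ℚ) * m.ascFactorial r = ∑ k ∈ Finset.range (r + 1),
      (if k = 0 then 0 else m.ascFactorial (r - k) * Hpoly k 1 1 m) := by
    apply mul_left_cancel₀ h0
    rw [← h']; ring
  rw [h3, ← Finset.sum_range_reflect, Finset.sum_range_succ', eq_sub_iff_add_eq]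
  obtain ⟨n, rfl⟩ : ∃ n, r = n + 1 := ⟨r - 1, by omega⟩
  rw [Finset.sum_range_succ, add_comm]
  have e : Finset.Icc 1 (n + 1 - 1) = Finset.Ico 1 (n + 1) := by ext; simp
  rw [e, Finset.sum_Ico_eq_sum_range]
  congr 1
  · rw [show n + 1 - 1 = n by omega]
    simp only [show n + 1 + 1 - 1 - (n + 1) = 0 by omega, if_true, add_zero]
    refine Finset.sum_congr rfl fun k hk => ?_
    have hk : k < n := by simpa using hk
    rw [if_neg (by omega), show n + 1 + 1 - 1 - (k + 1) = n + 1 - (1 + k) by omega,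
      show n + 1 - (n + 1 - (1 + k)) = 1 + k by omega]
  · simp
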